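/- Let G be a finite simple undirected graph on n ≥ 4 vertices with no isolated vertices, let r be the number of vertices of G of degree 1 and p the number of vertices of degree n − 1. If G is an equimatchable split graph, then at least one of the following holds: (i) p = n; (ii) r = n − 1 and p = 1; (iii) p = 1, r ≥ 2, n − r is even, and every vertex has degree 1, n − r − 1, or n − 1; (iv) p = 0, r ≥ 2, n − r is even, and there exist non-adjacent vertices x and y with d(x) = n − 2 and d(y) = n − r − 2 such that every vertex other than x and y has degree 1 or n − r − 1; (v) n is odd and there exist two vertices x and y with d(x) + d(y) = p + n − 2 such that every vertex other than x and y has degree n − 1 or n − 2. -/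

import Mathlib

open Finset

variable {V : Type*}

/-- A matching of `G`: a set of edges of `G` that are pairwise disjoint. -/
def IsMatching (G : SimpleGraph V) (M : Finset (Sym2 V)) : Prop :=
  (↑M : Set (Sym2 V)) ⊆ G.edgeSet ∧
    ∀ e ∈ M, ∀ f ∈ M, e ≠ f → ∀ v : V, v ∈ e → v ∉ f

/-- A maximal matching of `G`: a matching such that every edge of `G` shares an
endpoint with some edge of the matching. -/
def IsMaximalMatching (G : SimpleGraph V) (M : Finset (Sym2 V)) : Prop :=
  IsMatching G M ∧ ∀ e ∈ G.edgeSet, ∃ f ∈ M, ∃ v : V, v ∈ e ∧ v ∈ f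

/-- `G` is equimatchable if all maximal matchings have the same cardinality. -/
def Equimatchable (G : SimpleGraph V) : Prop :=
  ∀ M₁ M₂ : Finset (Sym2 V), IsMaximalMatching G M₁ → IsMaximalMatching G M₂ →
    M₁.card = M₂.card

/-- An independent set: a set of pairwise non-adjacent vertices. -/
def IsIndepSet (G : SimpleGraph V) (s : Set V) : Prop :=
  s.Pairwise fun a b => ¬ G.Adj a b

/-- A split graph: the vertex set can be partitioned into a clique and an
independent set. -/
def IsSplitGraph (G : SimpleGraph V) : Prop :=
  ∃ K I : Set V, Disjoint K I ∧ K ∪ I = Set.univ ∧ G.IsClique K ∧ IsIndepSet G I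

/-! Let `K` be the clique of a split partition. A matching of size `m` between `K` and the
independent side, with `#K + m` even, extends to a maximal matching that covers exactly `#K + m`
vertices: the vertices of `K` it misses are matched among themselves. In an equimatchable graph only
one value of `m` of the given parity can therefore occur, so by Kőnig's theorem the bipartite graph
between the two sides has a vertex cover of size at most one if `#K` is even, and at most two if
`#K` is odd.

If some split partition has an even clique, the cover yields a single centre to which all the
independent vertices are attached, unless there is at most one of them. If all split partitions have
an odd clique, no vertex can move between the sides, so every clique vertex has a neighbour outside
and every outside vertex misses a clique vertex; a cover of size two then consists of one vertex of
each side as soon as there are three independent vertices. The degrees can be read off in each case.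
-/

section Konig

variable {α β : Type*} {R : α → β → Prop}

/-- A matching of the bipartite graph with edge relation `R`, encoded by its finset of edges. -/
structure IsRelMatching (R : α → β → Prop) (P : Finset (α × β)) : Prop where
  rel : ∀ e ∈ P, R e.1 e.2
  injOn_fst : Set.InjOn Prod.fst (P : Set (α × β))
  injOn_snd : Set.InjOn Prod.snd (P : Set (α × β))

/-- A vertex cover of the bipartite graph with edge relation `R`: `A` on the left side together
with `B` on the right side. -/
def IsRelCover (R : α → β → Prop) (A : Finset α) (B : Finset β) : Prop :=
  ∀ a b, R a b → a ∈ A ∨ b ∈ B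

theorem IsRelMatching.subset {P Q : Finset (α × β)} (hP : IsRelMatching R P) (hQP : Q ⊆ P) :
    IsRelMatching R Q where
  rel e he := hP.rel e (hQP he)
  injOn_fst := hP.injOn_fst.mono (coe_subset.2 hQP)
  injOn_snd := hP.injOn_snd.mono (coe_subset.2 hQP)

protected theorem IsRelCover.flip {A : Finset α} {B : Finset β} (h : IsRelCover R A B) :
    IsRelCover (flip R) B A := fun b a hab => (h a b hab).symm

-- If a set `S` of vertices of `A` violated Hall's condition, exchanging `S` for its neighbours
-- outside `B` would give a smaller cover.
theorem IsRelCover.exists_injective_of_minimal [Finite β] {A : Finset α} {B : Finset β}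
    (hAB : IsRelCover R A B)
    (hmin : ∀ A' B', IsRelCover R A' B' → #A + #B ≤ #A' + #B') :
    ∃ f : A → β, Function.Injective f ∧ ∀ a : A, R a (f a) ∧ f a ∉ B := by
  classical
  have := Fintype.ofFinite β
  refine (Fintype.all_card_le_filter_rel_iff_exists_injective
    fun (a : A) b => R a b ∧ b ∉ B).1 fun S => ?_
  set T := S.map (Function.Embedding.subtype _)
  set N := univ.filter fun b => ∃ a ∈ S, R a b ∧ b ∉ B
  have hTA : T ⊆ A := fun a ha => by
    obtain ⟨a, -, rfl⟩ := mem_map.1 ha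
    exact a.2
  have hcover : IsRelCover R (A \ T) (B ∪ N) := by
    intro a b hab
    by_cases hb : b ∈ B
    · exact .inr (mem_union_left _ hb)
    have ha : a ∈ A := (hAB a b hab).resolve_right hb
    by_cases haT : a ∈ T
    · obtain ⟨a, haS, rfl⟩ := mem_map.1 haT
      exact .inr (mem_union_right _ (mem_filter.2 ⟨mem_univ _, a, haS, hab, hb⟩))
    · exact .inl (mem_sdiff.2 ⟨ha, haT⟩)
  have hle := hmin _ _ hcover
  have hunion := card_union_le B N
  have hsdiff := card_sdiff_add_card_eq_card hTA
  have hT : #T = #S := card_map _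
  omega

/-- **Kőnig's theorem**. -/
theorem exists_isRelCover_isRelMatching [Finite α] [Finite β] (R : α → β → Prop) :
    ∃ A B P, IsRelCover R A B ∧ IsRelMatching R P ∧ #P = #A + #B := by
  classical
  have := Fintype.ofFinite α
  have := Fintype.ofFinite β
  obtain ⟨⟨A, B⟩, hAB, hmin⟩ := exists_min_image
    (univ.filter fun c : Finset α × Finset β => IsRelCover R c.1 c.2) (fun c => #c.1 + #c.2)
    ⟨(univ, ∅), mem_filter.2 ⟨mem_univ _, fun a _ _ => .inl (mem_univ a)⟩⟩
  simp only [mem_filter, mem_univ, true_and, Prod.forall] at hAB hmin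
  obtain ⟨f, hf, hRf⟩ := hAB.exists_injective_of_minimal hmin
  obtain ⟨g, hg, hRg⟩ := hAB.flip.exists_injective_of_minimal fun B' A' h => by
    have := hmin A' B' h.flip
    omega
  have hF : Function.Injective fun a : A => ((a : α), f a) := fun a a' h => hf (congrArg Prod.snd h)
  have hG : Function.Injective fun b : B => (g b, (b : β)) := fun b b' h => hg (congrArg Prod.fst h)
  refine ⟨A, B, univ.map ⟨_, hF⟩ ∪ univ.map ⟨_, hG⟩, hAB, ⟨?_, ?_, ?_⟩, ?_⟩
  · intro e he
    simp only [mem_union, mem_map, mem_univ, true_and, Function.Embedding.coeFn_mk] at he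
    obtain ⟨a, rfl⟩ | ⟨b, rfl⟩ := he
    · exact (hRf a).1
    · exact (hRg b).1
  · intro e he e' he' h
    simp only [coe_union, coe_map, Function.Embedding.coeFn_mk, coe_univ, Set.image_univ,
      Set.mem_union, Set.mem_range] at he he'
    obtain ⟨a, rfl⟩ | ⟨b, rfl⟩ := he <;> obtain ⟨a', rfl⟩ | ⟨b', rfl⟩ := he' <;> grind
  · intro e he e' he' h
    simp only [coe_union, coe_map, Function.Embedding.coeFn_mk, coe_univ, Set.image_univ,
      Set.mem_union, Set.mem_range] at he he'
    obtain ⟨a, rfl⟩ | ⟨b, rfl⟩ := he <;> obtain ⟨a', rfl⟩ | ⟨b', rfl⟩ := he' <;> grind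
  · rw [card_union_of_disjoint, card_map, card_map, card_univ, card_univ, Fintype.card_coe,
      Fintype.card_coe]
    simp only [disjoint_left, mem_map, mem_univ, true_and, Function.Embedding.coeFn_mk]
    grind

end Konig

theorem IsMatching.card_biUnion_toFinset [DecidableEq V] {G : SimpleGraph V}
    {M : Finset (Sym2 V)} (hM : IsMatching G M) : #(M.biUnion Sym2.toFinset) = 2 * #M := by
  have hdisj : (M : Set (Sym2 V)).PairwiseDisjoint Sym2.toFinset := fun e he f hf hef =>
    disjoint_left.2 fun v hve hvf =>
      hM.2 e he f hf hef v (Sym2.mem_toFinset.1 hve) (Sym2.mem_toFinset.1 hvf)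
  rw [card_biUnion hdisj, sum_const_nat fun e he =>
    Sym2.card_toFinset_of_not_isDiag e (G.not_isDiag_of_mem_edgeSet (hM.1 he)), mul_comm]

theorem isMatching_toFinset_edgeSet {G : SimpleGraph V} {M : G.Subgraph}
    [Fintype M.edgeSet] (hM : M.IsMatching) : IsMatching G M.edgeSet.toFinset := by
  refine ⟨by simpa using M.edgeSet_subset, fun e he f hf hef v hve hvf => hef ?_⟩
  obtain ⟨a, rfl⟩ := hve
  obtain ⟨b, rfl⟩ := hvf
  rw [Set.mem_toFinset, SimpleGraph.Subgraph.mem_edgeSet] at he hf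
  rw [hM.eq_of_adj_left he hf]

theorem isMaximalMatching_toFinset_edgeSet {G : SimpleGraph V} {M : G.Subgraph}
    [Fintype M.edgeSet] (hM : M.IsMatching) (hind : G.IsIndepSet M.vertsᶜ) :
    IsMaximalMatching G M.edgeSet.toFinset := by
  refine ⟨isMatching_toFinset_edgeSet hM, fun e he => ?_⟩
  obtain ⟨v, hve, hv⟩ : ∃ v ∈ e, v ∈ M.verts := by
    induction e with | _ a b
    by_contra! h
    exact hind (h a (Sym2.mem_mk_left a b)) (h b (Sym2.mem_mk_right a b)) he.ne he
  obtain ⟨w, hvw, -⟩ := hM hv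
  exact ⟨s(v, w), by simpa using hvw, v, hve, Sym2.mem_mk_left v w⟩

theorem ncard_verts_eq_two_mul_card_edgeSet {G : SimpleGraph V} {M : G.Subgraph}
    [Fintype M.edgeSet] (hM : M.IsMatching) : M.verts.ncard = 2 * #M.edgeSet.toFinset := by
  classical
  rw [← (isMatching_toFinset_edgeSet hM).card_biUnion_toFinset, hM.verts_eq_biUnion_edgeSet,
    ← Set.ncard_coe_finset]
  congr 1
  ext v
  simp

theorem Equimatchable.ncard_verts_eq [Finite V] {G : SimpleGraph V} (hG : Equimatchable G)
    {M N : G.Subgraph} (hM : M.IsMatching) (hN : N.IsMatching)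
    (hMind : G.IsIndepSet M.vertsᶜ) (hNind : G.IsIndepSet N.vertsᶜ) :
    M.verts.ncard = N.verts.ncard := by
  classical
  have := Fintype.ofFinite V
  rw [ncard_verts_eq_two_mul_card_edgeSet hM, ncard_verts_eq_two_mul_card_edgeSet hN,
    hG _ _ (isMaximalMatching_toFinset_edgeSet hM hMind)
      (isMaximalMatching_toFinset_edgeSet hN hNind)]

theorem IsRelMatching.exists_subgraph_isMatching {G : SimpleGraph V} {P : Finset (V × V)}
    (hP : IsRelMatching G.Adj P)
    (hdisj : Disjoint (Prod.fst '' (P : Set (V × V))) (Prod.snd '' (P : Set (V × V)))) :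
    ∃ M : G.Subgraph, M.verts = Prod.fst '' (P : Set (V × V)) ∪ Prod.snd '' (P : Set (V × V)) ∧
      M.IsMatching := by
  let fstEquiv := Equiv.Set.imageOfInjOn Prod.fst (P : Set (V × V)) hP.injOn_fst
  let sndEquiv := Equiv.Set.imageOfInjOn Prod.snd (P : Set (V × V)) hP.injOn_snd
  refine SimpleGraph.Subgraph.IsMatching.exists_of_disjoint_sets_of_equiv hdisj
    (fstEquiv.symm.trans sndEquiv) fun v => ?_
  obtain ⟨e, rfl⟩ := fstEquiv.surjective v
  rw [Equiv.trans_apply, Equiv.symm_apply_apply]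
  exact hP.rel e e.2

/-- The bipartite graph of the edges of `G` leaving `K`, directed from `K` to its complement. -/
def CrossAdj (G : SimpleGraph V) (K : Finset V) (a b : V) : Prop :=
  a ∈ K ∧ b ∉ K ∧ G.Adj a b

/-- `K` is the clique of a split partition of `G`; the independent side is the complement of `K`. -/
structure IsSplitClique (G : SimpleGraph V) (K : Finset V) : Prop where
  isClique : G.IsClique (K : Set V)
  isIndepSet : G.IsIndepSet (K : Set V)ᶜ

theorem IsSplitGraph.exists_isSplitClique [Finite V] {G : SimpleGraph V} (hG : IsSplitGraph G) :
    ∃ K, IsSplitClique G K := by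
  obtain ⟨K, I, hdisj, hunion, hK, hI⟩ := hG
  have hIK : Kᶜ = I := (IsCompl.of_eq hdisj.inter_eq hunion).compl_eq
  refine ⟨K.toFinite.toFinset, ?_, ?_⟩
  · simpa using hK
  · rw [Set.Finite.coe_toFinset, hIK]
    exact hI

/-- The vertices outside `C` are leaves of `G`, all attached to the vertex `x` of `C`. -/
structure IsPendantAt (G : SimpleGraph V) (C : Finset V) (x : V) : Prop where
  center_mem : x ∈ C
  adj_iff : ∀ v ∉ C, ∀ w, G.Adj v w ↔ w = x

/-- The vertices of `C` are pairwise adjacent, except for `x` and `y`. -/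
structure IsCliqueMinusEdge (G : SimpleGraph V) (C : Finset V) (x y : V) : Prop where
  left_mem : x ∈ C
  right_mem : y ∈ C
  ne : x ≠ y
  not_adj : ¬ G.Adj x y
  isClique_left : G.IsClique ((C : Set V) \ {y})
  isClique_right : G.IsClique ((C : Set V) \ {x})

/-- The vertices other than the non-adjacent vertices `y` and `z` form a clique, and each of them
is adjacent to `y` or `z`. -/
structure IsCliqueDominatedBy (G : SimpleGraph V) (y z : V) : Prop where
  ne : y ≠ z
  not_adj : ¬ G.Adj y z
  isClique : G.IsClique {y, z}ᶜ
  adj_or_adj : ∀ v, v ≠ y → v ≠ z → G.Adj v y ∨ G.Adj v z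

section Structure

variable {G : SimpleGraph V}

namespace IsPendantAt

variable {C : Finset V} {x : V}

theorem of_adj_imp_eq (hIso : ∀ v, ∃ w, G.Adj v w) (hx : x ∈ C)
    (h : ∀ v ∉ C, ∀ w, G.Adj v w → w = x) : IsPendantAt G C x := by
  refine ⟨hx, fun v hv w => ⟨h v hv w, ?_⟩⟩
  rintro rfl
  obtain ⟨w', hw'⟩ := hIso v
  exact h v hv w' hw' ▸ hw'

theorem isUniversal_center (h : IsPendantAt G C x) (hC : G.IsClique (C : Set V)) :
    G.IsUniversal x := by
  intro v hxv
  by_cases hv : v ∈ C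
  · exact hC h.center_mem hv hxv
  · exact ((h.adj_iff v hv x).2 rfl).symm

theorem eq_center_of_isUniversal [Fintype V] [DecidableEq V] (h : IsPendantAt G C x)
    (hC : 2 ≤ #Cᶜ) {v : V} (hv : G.IsUniversal v) : v = x := by
  obtain ⟨w, hw, hwv⟩ := exists_mem_ne hC v
  exact (h.adj_iff w (mem_compl.1 hw) v).1 (hv hwv.symm).symm

end IsPendantAt

namespace IsCliqueMinusEdge

variable {C : Finset V} {x y : V}

theorem adj_of_mem (hC : IsCliqueMinusEdge G C x y) {v w : V} (hv : v ∈ C) (hw : w ∈ C)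
    (hvx : v ≠ x) (hvy : v ≠ y) (hvw : v ≠ w) : G.Adj v w := by
  obtain rfl | hwy := eq_or_ne w y
  · exact hC.isClique_right ⟨hv, hvx⟩ ⟨hw, hC.ne.symm⟩ hvw
  · exact hC.isClique_left ⟨hv, hvy⟩ ⟨hw, hwy⟩ hvw

theorem three_le_card (hC : IsCliqueMinusEdge G C x y) (h : IsPendantAt G C x)
    (hIso : ∀ v, ∃ w, G.Adj v w) : 3 ≤ #C := by
  obtain ⟨w, hyw⟩ := hIso y
  have hw : w ∈ C := by_contra fun hw => hC.ne ((h.adj_iff w hw y).1 hyw.symm).symm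
  refine two_lt_card.2 ⟨x, hC.left_mem, y, hC.right_mem, w, hw, hC.ne, ?_, hyw.ne⟩
  rintro rfl
  exact hC.not_adj hyw.symm

end IsCliqueMinusEdge

namespace IsCliqueDominatedBy

variable {y z : V}

protected theorem symm (h : IsCliqueDominatedBy G y z) : IsCliqueDominatedBy G z y where
  ne := h.ne.symm
  not_adj hzy := h.not_adj hzy.symm
  isClique := Set.pair_comm y z ▸ h.isClique
  adj_or_adj v hvz hvy := (h.adj_or_adj v hvy hvz).symm

theorem isUniversal_iff (h : IsCliqueDominatedBy G y z) {v : V} :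
    G.IsUniversal v ↔ G.Adj y v ∧ G.Adj z v := by
  refine ⟨fun hv => ⟨(hv ?_).symm, (hv ?_).symm⟩, fun ⟨hyv, hzv⟩ w hvw => ?_⟩
  · rintro rfl
    exact h.not_adj (hv h.ne)
  · rintro rfl
    exact h.not_adj (hv h.ne.symm).symm
  · obtain rfl | hwy := eq_or_ne w y
    · exact hyv.symm
    obtain rfl | hwz := eq_or_ne w z
    · exact hzv.symm
    · exact h.isClique (by simp [hyv.ne', hzv.ne']) (by simp [hwy, hwz]) hvw

end IsCliqueDominatedBy

end Structure

namespace IsSplitClique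

variable {G : SimpleGraph V} {K : Finset V}

theorem not_adj (hK : IsSplitClique G K) {a b : V} (ha : a ∉ K) (hb : b ∉ K) : ¬ G.Adj a b :=
  fun hab => hK.isIndepSet ha hb hab.ne hab

theorem exists_adj_of_notMem (hK : IsSplitClique G K) (hG : ∀ v, ∃ w, G.Adj v w) {b : V}
    (hb : b ∉ K) : ∃ a ∈ K, G.Adj a b := by
  obtain ⟨a, hab⟩ := hG b
  exact ⟨a, by_contra fun ha => hK.not_adj hb ha hab, hab.symm⟩

theorem isCliqueDominatedBy (hK : IsSplitClique G K) {x y : V} (hx : x ∈ K) (hy : y ∉ K)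
    (hxy : ¬ G.Adj x y) (hout : ∀ v ∉ K, v = y) : IsCliqueDominatedBy G x y where
  ne := ne_of_mem_of_not_mem hx hy
  not_adj := hxy
  isClique := hK.isClique.subset fun v hv => by_contra fun hvK => hv (.inr (hout v hvK))
  adj_or_adj v hvx hvy := .inl (hK.isClique (by_contra fun hvK => hvy (hout v hvK)) hx hvx)

theorem eq_top_or_exists_isCliqueDominatedBy [Fintype V] [DecidableEq V] (hK : IsSplitClique G K)
    (hcard : #Kᶜ ≤ 1) : G = ⊤ ∨ #K + 1 = Fintype.card V ∧ ∃ x y, IsCliqueDominatedBy G x y := by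
  by_cases hex : ∃ x ∈ K, ∃ y ∉ K, ¬ G.Adj x y
  · obtain ⟨x, hx, y, hy, hxy⟩ := hex
    have hout : ∀ v ∉ K, v = y := fun v hv =>
      card_le_one.1 hcard v (mem_compl.2 hv) y (mem_compl.2 hy)
    have hpos : 0 < #Kᶜ := card_pos.2 ⟨y, mem_compl.2 hy⟩
    have := card_add_card_compl K
    exact .inr ⟨by omega, x, y, hK.isCliqueDominatedBy hx hy hxy hout⟩
  push Not at hex
  refine .inl (SimpleGraph.eq_top_iff_forall_ne_adj.2 fun a b hab => ?_)
  by_cases ha : a ∈ K <;> by_cases hb : b ∈ K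
  · exact hK.isClique ha hb hab
  · exact hex a ha b hb
  · exact (hex b hb a ha).symm
  · exact absurd (card_le_one.1 hcard a (mem_compl.2 ha) b (mem_compl.2 hb)) hab

variable [DecidableEq V]

protected theorem insert (hK : IsSplitClique G K) {y : V} (hy : ∀ v ∈ K, G.Adj v y) :
    IsSplitClique G (insert y K) where
  isClique := by
    rw [coe_insert]
    exact hK.isClique.insert fun v hv _ => (hy v hv).symm
  isIndepSet := hK.isIndepSet.mono (by simp)

protected theorem erase (hK : IsSplitClique G K) {x : V} (hx : ∀ w ∉ K, ¬ G.Adj x w) :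
    IsSplitClique G (K.erase x) where
  isClique := hK.isClique.subset (coe_subset.2 (erase_subset x K))
  isIndepSet := by
    intro a ha b hb hab hadj
    simp only [coe_erase, Set.mem_compl_iff, Set.mem_sdiff, mem_coe, Set.mem_singleton_iff,
      not_and_not_right] at ha hb
    by_cases haK : a ∈ K <;> by_cases hbK : b ∈ K
    · exact hab ((ha haK).trans (hb hbK).symm)
    · exact hx b hbK (ha haK ▸ hadj)
    · exact hx a haK (hb hbK ▸ hadj.symm)
    · exact hK.not_adj haK hbK hadj

end IsSplitClique

theorem IsRelMatching.exists_isMatching_of_even {G : SimpleGraph V}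
    {K : Finset V} {P : Finset (V × V)} (hK : G.IsClique (K : Set V))
    (hP : IsRelMatching (CrossAdj G K) P) (heven : Even (#K + #P)) :
    ∃ M : G.Subgraph, M.IsMatching ∧ (K : Set V) ⊆ M.verts ∧ M.verts.ncard = #K + #P := by
  classical
  set S := P.image Prod.fst
  set T := P.image Prod.snd
  have hS : #S = #P := card_image_of_injOn hP.injOn_fst
  have hT : #T = #P := card_image_of_injOn hP.injOn_snd
  have hSK : S ⊆ K := image_subset_iff.2 fun e he => (hP.rel e he).1
  have hKT : Disjoint K T := disjoint_right.2 <| forall_mem_image.2 fun e he => (hP.rel e he).2.1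
  obtain ⟨M₁, hM₁verts, hM₁⟩ := IsRelMatching.exists_subgraph_isMatching (G := G) (P := P)
    ⟨fun e he => (hP.rel e he).2.2, hP.injOn_fst, hP.injOn_snd⟩
    (by simpa only [S, T, ← coe_image, disjoint_coe] using hKT.mono_left hSK)
  rw [← coe_image, ← coe_image, ← coe_union] at hM₁verts
  have hrest : Even #(K \ S) := by
    have := card_sdiff_add_card_eq_card hSK
    grind
  obtain ⟨M₂, hM₂verts, hM₂⟩ := ((hK.subset (coe_subset.2 sdiff_subset)).even_iff_exists_isMatching
    (K \ S).finite_toSet).1 (by rwa [Set.ncard_coe_finset])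
  have hverts : (M₁ ⊔ M₂).verts = ↑(K ∪ T) := by
    rw [SimpleGraph.Subgraph.verts_sup, hM₁verts, hM₂verts, ← coe_union]
    congr 1
    grind
  refine ⟨M₁ ⊔ M₂, hM₁.sup hM₂ ?_, ?_, ?_⟩
  · rw [hM₁.support_eq_verts, hM₂.support_eq_verts, hM₁verts, hM₂verts, disjoint_coe]
    exact disjoint_union_left.2 ⟨disjoint_sdiff, (hKT.mono_left sdiff_subset).symm⟩
  · rw [hverts]
    exact coe_subset.2 subset_union_left
  · rw [hverts, Set.ncard_coe_finset, card_union_of_disjoint hKT, hT]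

namespace Equimatchable

variable [Finite V] {G : SimpleGraph V} {K : Finset V}

theorem card_eq_of_isRelMatching (hG : Equimatchable G) (hK : IsSplitClique G K)
    {P Q : Finset (V × V)} (hP : IsRelMatching (CrossAdj G K) P)
    (hQ : IsRelMatching (CrossAdj G K) Q) (hPeven : Even (#K + #P)) (hQeven : Even (#K + #Q)) :
    #P = #Q := by
  obtain ⟨M, hM, hKM, hMcard⟩ := hP.exists_isMatching_of_even hK.isClique hPeven
  obtain ⟨N, hN, hKN, hNcard⟩ := hQ.exists_isMatching_of_even hK.isClique hQeven
  have := hG.ncard_verts_eq hM hN (hK.isIndepSet.mono (Set.compl_subset_compl.2 hKM))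
    (hK.isIndepSet.mono (Set.compl_subset_compl.2 hKN))
  omega

theorem exists_isRelCover_card_lt (hG : Equimatchable G) (hK : IsSplitClique G K) {j : ℕ}
    (hj : Even (#K + j)) : ∃ A B, IsRelCover (CrossAdj G K) A B ∧ #A + #B < j + 2 := by
  obtain ⟨A, B, P, hcover, hP, hcard⟩ := exists_isRelCover_isRelMatching (CrossAdj G K)
  refine ⟨A, B, hcover, hcard ▸ ?_⟩
  by_contra! hlarge
  obtain ⟨Q, hQP, hQ⟩ := exists_subset_card_eq (show j ≤ #P by omega)
  obtain ⟨Q', hQP', hQ'⟩ := exists_subset_card_eq hlarge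
  have := hG.card_eq_of_isRelMatching hK (hP.subset hQP) (hP.subset hQP')
    (by rwa [hQ]) (by rw [hQ']; grind)
  omega

end Equimatchable

section Classification

variable {G : SimpleGraph V} {K : Finset V}

theorem Equimatchable.exists_isPendantAt [Fintype V] [DecidableEq V] (hG : Equimatchable G)
    (hIso : ∀ v, ∃ w, G.Adj v w) (hK : IsSplitClique G K) (heven : Even #K) (hcard : 2 ≤ #Kᶜ) :
    ∃ x, IsPendantAt G K x := by
  obtain ⟨A, B, hcover, hAB⟩ := hG.exists_isRelCover_card_lt hK (j := 0) (by simpa using heven)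
  obtain ⟨b, hb, hbB⟩ := exists_mem_notMem_of_card_lt_card (show #B < #Kᶜ by omega)
  rw [mem_compl] at hb
  obtain ⟨x, hx, hxb⟩ := hK.exists_adj_of_notMem hIso hb
  have hxA : x ∈ A := (hcover x b ⟨hx, hb, hxb⟩).resolve_right hbB
  have hApos : 0 < #A := card_pos.2 ⟨x, hxA⟩
  have hBempty : B = ∅ := card_eq_zero.1 (by omega)
  refine ⟨x, .of_adj_imp_eq hIso hx fun v hv w hvw => ?_⟩
  have hw : w ∈ K := by_contra fun hw => hK.not_adj hv hw hvw
  have hwA : w ∈ A := (hcover w v ⟨hw, hv, hvw.symm⟩).resolve_right (by simp [hBempty])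
  exact card_le_one.1 (by omega) w hwA x hxA

namespace IsSplitClique

variable (hK : IsSplitClique G K) (hodd : ∀ K', IsSplitClique G K' → Odd #K')

include hK hodd

theorem exists_adj_of_mem {x : V} (hx : x ∈ K) : ∃ w ∉ K, G.Adj x w := by
  classical
  by_contra! hno
  have := hodd K hK
  have := hodd _ (hK.erase hno)
  have := card_erase_add_one hx
  grind

theorem exists_not_adj_of_notMem {y : V} (hy : y ∉ K) : ∃ x ∈ K, ¬ G.Adj x y := by
  classical
  by_contra! hall
  have := hodd K hK
  have := hodd _ (hK.insert hall)
  have := card_insert_of_notMem hy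
  grind

theorem three_le_card : 3 ≤ #K := by
  suffices #K ≠ 1 by
    obtain ⟨k, hk⟩ := hodd K hK
    omega
  intro hone
  obtain ⟨a, ha⟩ := card_pos.1 (hodd K hK).pos
  obtain ⟨y, hy, hay⟩ := hK.exists_adj_of_mem hodd ha
  obtain ⟨x, hx, hxy⟩ := hK.exists_not_adj_of_notMem hodd hy
  exact hxy (card_le_one.1 hone.le a ha x hx ▸ hay)

variable [DecidableEq V]

theorem isPendantAt_and_isCliqueMinusEdge {x y : V} (hIso : ∀ v, ∃ w, G.Adj v w)
    (hx : x ∈ K) (hy : y ∉ K) (hxy : ∀ u ∈ K, ∀ v ∉ K, G.Adj u v → u = x ∨ v = y) :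
    IsPendantAt G (insert y K) x ∧ IsCliqueMinusEdge G (insert y K) x y := by
  have hadj_y : ∀ v ∈ K, v ≠ x → G.Adj v y := by
    intro v hv hvx
    obtain ⟨w, hw, hvw⟩ := hK.exists_adj_of_mem hodd hv
    exact (hxy v hv w hw hvw).resolve_left hvx ▸ hvw
  have hnot : ¬ G.Adj x y := by
    obtain ⟨x', hx', hx'y⟩ := hK.exists_not_adj_of_notMem hodd hy
    rwa [← show x' = x from by_contra fun h => hx'y (hadj_y x' hx' h)]
  refine ⟨.of_adj_imp_eq hIso (mem_insert_of_mem hx) fun v hv w hvw => ?_,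
    mem_insert_of_mem hx, mem_insert_self y K, ne_of_mem_of_not_mem hx hy, hnot, ?_, ?_⟩
  · rw [mem_insert, not_or] at hv
    have hw : w ∈ K := by_contra fun hw => hK.not_adj hv.2 hw hvw
    exact (hxy w hw v hv.2 hvw.symm).resolve_right hv.1
  · exact hK.isClique.subset fun v hv => (mem_insert.1 hv.1).resolve_left hv.2
  · refine ((hK.isClique.subset (Set.sdiff_subset : (K : Set V) \ {x} ⊆ K)).insert
      fun v hv _ => (hadj_y v hv.1 hv.2).symm).subset ?_
    rw [coe_insert]
    exact Set.insert_sdiff_subset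

variable [Fintype V]

theorem two_le_card_compl : 2 ≤ #Kᶜ := by
  obtain ⟨x, hx⟩ := card_pos.1 (hodd K hK).pos
  obtain ⟨y, hy, -⟩ := hK.exists_adj_of_mem hodd hx
  obtain ⟨x', hx', hx'y⟩ := hK.exists_not_adj_of_notMem hodd hy
  obtain ⟨y', hy', hx'y'⟩ := hK.exists_adj_of_mem hodd hx'
  refine one_lt_card.2 ⟨y, mem_compl.2 hy, y', mem_compl.2 hy', ?_⟩
  rintro rfl
  exact hx'y hx'y'

theorem exists_isCliqueDominatedBy_of_card_compl (hcard : #Kᶜ = 2) :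
    ∃ y z, IsCliqueDominatedBy G y z := by
  obtain ⟨y, z, hyz, hcompl⟩ := card_eq_two.1 hcard
  have hout : ∀ v, v ∉ K ↔ v = y ∨ v = z := fun v => by
    rw [← mem_compl, hcompl, mem_insert, mem_singleton]
  refine ⟨y, z, hyz, hK.not_adj ((hout y).2 (.inl rfl)) ((hout z).2 (.inr rfl)),
    hK.isClique.subset fun v hv => by_contra fun hvK => hv ((hout v).1 hvK), fun v hvy hvz => ?_⟩
  have hv : v ∈ K := by_contra fun hvK => ((hout v).1 hvK).elim hvy hvz
  obtain ⟨w, hw, hvw⟩ := hK.exists_adj_of_mem hodd hv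
  exact ((hout w).1 hw).imp (fun h : w = y => h ▸ hvw) fun h : w = z => h ▸ hvw

theorem exists_isPendantAt_isCliqueMinusEdge (hG : Equimatchable G)
    (hIso : ∀ v, ∃ w, G.Adj v w) (hcard : 3 ≤ #Kᶜ) :
    ∃ x y, y ∉ K ∧ IsPendantAt G (insert y K) x ∧ IsCliqueMinusEdge G (insert y K) x y := by
  obtain ⟨A, B, hcover, hAB⟩ := hG.exists_isRelCover_card_lt hK (hodd K hK).add_one
  have hKcard := hK.three_le_card hodd
  obtain ⟨b, hb, hbB⟩ := exists_mem_notMem_of_card_lt_card (show #B < #Kᶜ by omega)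
  obtain ⟨a, ha, haA⟩ := exists_mem_notMem_of_card_lt_card (show #A < #K by omega)
  rw [mem_compl] at hb
  obtain ⟨x, hx, hxb⟩ := hK.exists_adj_of_notMem hIso hb
  obtain ⟨y, hy, hay⟩ := hK.exists_adj_of_mem hodd ha
  have hxA : x ∈ A := (hcover x b ⟨hx, hb, hxb⟩).resolve_right hbB
  have hyB : y ∈ B := (hcover a y ⟨ha, hy, hay⟩).resolve_left haA
  have hApos : 0 < #A := card_pos.2 ⟨x, hxA⟩
  have hBpos : 0 < #B := card_pos.2 ⟨y, hyB⟩
  exact ⟨x, y, hy, hK.isPendantAt_and_isCliqueMinusEdge hodd hIso hx hy fun u hu v hv huv =>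
    (hcover u v ⟨hu, hv, huv⟩).imp (fun huA => card_le_one.1 (by omega) u huA x hxA)
      fun hvB => card_le_one.1 (by omega) v hvB y hyB⟩

end IsSplitClique

theorem Equimatchable.classification [Fintype V] [DecidableEq V] (hG : Equimatchable G)
    (hIso : ∀ v, ∃ w, G.Adj v w) (hsplit : IsSplitGraph G) :
    G = ⊤ ∨
    (∃ C x, Even #C ∧ 2 ≤ #Cᶜ ∧ IsPendantAt G C x ∧ G.IsClique (C : Set V)) ∨
    (∃ C x y, Even #C ∧ 2 ≤ #Cᶜ ∧ IsPendantAt G C x ∧ IsCliqueMinusEdge G C x y) ∨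
    (Odd (Fintype.card V) ∧ ∃ y z, IsCliqueDominatedBy G y z) := by
  by_cases heven : ∃ K, IsSplitClique G K ∧ Even #K
  · obtain ⟨K, hK, hKeven⟩ := heven
    obtain hcard | hcard := le_or_gt #Kᶜ 1
    · refine (hK.eq_top_or_exists_isCliqueDominatedBy hcard).imp_right fun ⟨hV, h⟩ => ?_
      exact .inr (.inr ⟨hV ▸ hKeven.add_one, h⟩)
    · obtain ⟨x, hx⟩ := hG.exists_isPendantAt hIso hK hKeven hcard
      exact .inr (.inl ⟨K, x, hKeven, hcard, hx, hK.isClique⟩)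
  · have hodd : ∀ K, IsSplitClique G K → Odd #K := fun K hK =>
      Nat.not_even_iff_odd.1 fun h => heven ⟨K, hK, h⟩
    obtain ⟨K, hK⟩ := hsplit.exists_isSplitClique
    obtain hcard | hcard := (hK.two_le_card_compl hodd).eq_or_lt
    · refine .inr (.inr (.inr ⟨?_, hK.exists_isCliqueDominatedBy_of_card_compl hodd hcard.symm⟩))
      rw [← card_add_card_compl K, ← hcard]
      exact (hodd K hK).add_even even_two
    · obtain ⟨x, y, hy, hpendant, hminus⟩ :=
        hK.exists_isPendantAt_isCliqueMinusEdge hodd hG hIso hcard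
      refine .inr (.inr (.inl ⟨_, x, y, ?_, ?_, hpendant, hminus⟩))
      · rw [card_insert_of_notMem hy]
        exact (hodd K hK).add_one
      · have := card_compl_add_card K
        have := card_compl_add_card (insert y K)
        have := card_insert_of_notMem hy
        omega

end Classification

section Degree

variable [Fintype V] {G : SimpleGraph V} [DecidableRel G.Adj]

theorem degree_eq_card_of_adj_iff_mem {v : V} {S : Finset V} (h : ∀ w, G.Adj v w ↔ w ∈ S) :
    G.degree v = #S := by
  rw [← G.card_neighborFinset_eq_degree]
  congr 1
  ext w
  rw [SimpleGraph.mem_neighborFinset, h]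

theorem degree_eq_card_sub_two {v w : V} (hvw : v ≠ w)
    (h : ∀ u, G.Adj v u ↔ u ≠ v ∧ u ≠ w) : G.degree v = Fintype.card V - 2 := by
  classical
  rw [degree_eq_card_of_adj_iff_mem (S := {v, w}ᶜ) (by simpa using h), card_compl, card_pair hvw]

namespace IsPendantAt

variable {C : Finset V} {x : V}

theorem degree_eq_one (h : IsPendantAt G C x) {v : V} (hv : v ∉ C) : G.degree v = 1 := by
  rw [degree_eq_card_of_adj_iff_mem (S := {x}) (by simpa using h.adj_iff v hv), card_singleton]

theorem degree_eq_card_sub_one_of_adj (h : IsPendantAt G C x) {v : V} (hv : v ∈ C) (hvx : v ≠ x)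
    (hadj : ∀ w ∈ C, w ≠ v → G.Adj v w) : G.degree v = #C - 1 := by
  classical
  rw [degree_eq_card_of_adj_iff_mem (S := C.erase v), card_erase_of_mem hv]
  refine fun w => ⟨fun hvw => mem_erase.2 ⟨hvw.ne', by_contra fun hw => ?_⟩, fun hw => ?_⟩
  · exact hvx ((h.adj_iff w hw v).1 hvw.symm)
  · exact hadj w (mem_of_mem_erase hw) (ne_of_mem_erase hw)

theorem filter_degree_eq_one [DecidableEq V] (h : IsPendantAt G C x)
    (hC : ∀ v ∈ C, G.degree v ≠ 1) : ({v | G.degree v = 1} : Finset V) = Cᶜ := by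
  ext v
  rw [mem_filter_univ, mem_compl]
  exact ⟨fun hv hvC => hC v hvC hv, h.degree_eq_one⟩

theorem card_sub_card_filter_degree_eq_one (h : IsPendantAt G C x)
    (hC : ∀ v ∈ C, G.degree v ≠ 1) : Fintype.card V - #{v | G.degree v = 1} = #C := by
  classical
  rw [h.filter_degree_eq_one hC, ← card_compl, compl_compl]

theorem card_filter_degree_eq_card_sub_one [DecidableEq V] (h : IsPendantAt G C x)
    (hC : G.IsClique (C : Set V)) (hcard : 2 ≤ #Cᶜ) :
    #{v | G.degree v = Fintype.card V - 1} = 1 := by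
  refine card_eq_one.2 ⟨x, ?_⟩
  ext v
  rw [mem_filter_univ, SimpleGraph.degree_eq_card_sub_one, mem_singleton]
  refine ⟨h.eq_center_of_isUniversal hcard, ?_⟩
  rintro rfl
  exact h.isUniversal_center hC

theorem card_filter_degree_eq_one_of_card_eq_two [DecidableEq V] (h : IsPendantAt G C x)
    (hC : G.IsClique (C : Set V)) (hcard : 2 ≤ #Cᶜ) (htwo : #C = 2) :
    #{v | G.degree v = 1} = Fintype.card V - 1 := by
  have hV := card_add_card_compl C
  have hx := (G.degree_eq_card_sub_one x).2 (h.isUniversal_center hC)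
  rw [← card_univ, ← card_erase_of_mem (mem_univ x)]
  congr 1
  ext v
  rw [mem_filter_univ, mem_erase, and_iff_left (mem_univ v)]
  refine ⟨?_, fun hvx => ?_⟩
  · rintro hv rfl
    omega
  · by_cases hv : v ∈ C
    · rw [h.degree_eq_card_sub_one_of_adj hv hvx fun w hw hwv => hC hv hw hwv.symm, htwo]
    · exact h.degree_eq_one hv

theorem degree_classification_of_isClique [DecidableEq V] (h : IsPendantAt G C x)
    (hC : G.IsClique (C : Set V)) (heven : Even #C) (hcard : 2 ≤ #Cᶜ) (htwo : #C ≠ 2) :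
    2 ≤ #{v | G.degree v = 1} ∧ Even (Fintype.card V - #{v | G.degree v = 1}) ∧
      ∀ v, G.degree v = 1 ∨ G.degree v = Fintype.card V - #{v | G.degree v = 1} - 1 ∨
        G.degree v = Fintype.card V - 1 := by
  have hV := card_add_card_compl C
  have hpos : 0 < #C := card_pos.2 ⟨x, h.center_mem⟩
  have hthree : 3 ≤ #C := by grind
  have hx := (G.degree_eq_card_sub_one x).2 (h.isUniversal_center hC)
  have hdeg : ∀ v ∈ C, v ≠ x → G.degree v = #C - 1 := fun v hv hvx =>
    h.degree_eq_card_sub_one_of_adj hv hvx fun w hw hwv => hC hv hw hwv.symm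
  have hne : ∀ v ∈ C, G.degree v ≠ 1 := by
    intro v hv
    obtain rfl | hvx := eq_or_ne v x
    · omega
    · rw [hdeg v hv hvx]
      omega
  rw [h.card_sub_card_filter_degree_eq_one hne, h.filter_degree_eq_one hne]
  refine ⟨hcard, heven, fun v => ?_⟩
  by_cases hv : v ∈ C
  · obtain rfl | hvx := eq_or_ne v x
    · exact .inr (.inr hx)
    · exact .inr (.inl (hdeg v hv hvx))
  · exact .inl (h.degree_eq_one hv)

end IsPendantAt

namespace IsCliqueMinusEdge

variable {C : Finset V} {x y : V}

theorem degree_left (hC : IsCliqueMinusEdge G C x y) (h : IsPendantAt G C x) :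
    G.degree x = Fintype.card V - 2 := by
  refine degree_eq_card_sub_two hC.ne fun v => ⟨fun hxv => ⟨hxv.ne', ?_⟩, fun ⟨hvx, hvy⟩ => ?_⟩
  · rintro rfl
    exact hC.not_adj hxv
  · by_cases hv : v ∈ C
    · exact (hC.adj_of_mem hv hC.left_mem hvx hvy hvx).symm
    · exact ((h.adj_iff v hv x).2 rfl).symm

theorem degree_right (hC : IsCliqueMinusEdge G C x y) (h : IsPendantAt G C x) :
    G.degree y = #C - 2 := by
  classical
  rw [degree_eq_card_of_adj_iff_mem (S := C \ {x, y}), card_sdiff_of_subset, card_pair hC.ne]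
  · simp [insert_subset_iff, hC.left_mem, hC.right_mem]
  intro w
  simp only [mem_sdiff, mem_insert, mem_singleton, not_or]
  refine ⟨fun hyw => ⟨?_, ?_, hyw.ne'⟩, fun ⟨hw, hwx, hwy⟩ => ?_⟩
  · exact by_contra fun hw => hC.ne ((h.adj_iff w hw y).1 hyw.symm).symm
  · rintro rfl
    exact hC.not_adj hyw.symm
  · exact (hC.adj_of_mem hw hC.right_mem hwx hwy hwy).symm

theorem degree_of_mem (hC : IsCliqueMinusEdge G C x y) (h : IsPendantAt G C x) {v : V}
    (hv : v ∈ C) (hvx : v ≠ x) (hvy : v ≠ y) : G.degree v = #C - 1 :=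
  h.degree_eq_card_sub_one_of_adj hv hvx fun _ hw hwv => hC.adj_of_mem hv hw hvx hvy hwv.symm

theorem card_filter_degree_eq_card_sub_one [DecidableEq V] (hC : IsCliqueMinusEdge G C x y)
    (h : IsPendantAt G C x) (hcard : 2 ≤ #Cᶜ) : #{v | G.degree v = Fintype.card V - 1} = 0 := by
  refine card_eq_zero.2 (filter_eq_empty_iff.2 fun v _ hv => hC.not_adj ?_)
  rw [SimpleGraph.degree_eq_card_sub_one] at hv
  obtain rfl := h.eq_center_of_isUniversal hcard hv
  exact hv hC.ne

theorem degree_classification [DecidableEq V] (hC : IsCliqueMinusEdge G C x y)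
    (h : IsPendantAt G C x) (hIso : ∀ v, ∃ w, G.Adj v w) (heven : Even #C) (hcard : 2 ≤ #Cᶜ) :
    2 ≤ #{v | G.degree v = 1} ∧ Even (Fintype.card V - #{v | G.degree v = 1}) ∧
      ∃ x y, x ≠ y ∧ ¬ G.Adj x y ∧ G.degree x = Fintype.card V - 2 ∧
        G.degree y = Fintype.card V - #{v | G.degree v = 1} - 2 ∧
        ∀ v, v ≠ x → v ≠ y →
          G.degree v = 1 ∨ G.degree v = Fintype.card V - #{v | G.degree v = 1} - 1 := by
  have hV := card_add_card_compl C
  have hthree := hC.three_le_card h hIso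
  have hx := hC.degree_left h
  have hy := hC.degree_right h
  have hne : ∀ v ∈ C, G.degree v ≠ 1 := by
    intro v hv
    obtain rfl | hvx := eq_or_ne v x
    · omega
    obtain rfl | hvy := eq_or_ne v y
    · grind
    · have := hC.degree_of_mem h hv hvx hvy
      omega
  rw [h.card_sub_card_filter_degree_eq_one hne, h.filter_degree_eq_one hne]
  refine ⟨hcard, heven, x, y, hC.ne, hC.not_adj, hx, hy, fun v hvx hvy => ?_⟩
  by_cases hv : v ∈ C
  · exact .inr (hC.degree_of_mem h hv hvx hvy)
  · exact .inl (h.degree_eq_one hv)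

end IsCliqueMinusEdge

namespace IsCliqueDominatedBy

variable {y z : V}

theorem degree_add_degree (h : IsCliqueDominatedBy G y z) :
    G.degree y + G.degree z =
      #{v | G.degree v = Fintype.card V - 1} + Fintype.card V - 2 := by
  classical
  have hinter : G.neighborFinset y ∩ G.neighborFinset z =
      ({v | G.degree v = Fintype.card V - 1} : Finset V) := by
    ext v
    simp [SimpleGraph.degree_eq_card_sub_one, h.isUniversal_iff]
  have hunion : G.neighborFinset y ∪ G.neighborFinset z = {y, z}ᶜ := by
    ext v
    simp only [mem_union, SimpleGraph.mem_neighborFinset, mem_compl, mem_insert, mem_singleton,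
      not_or]
    refine ⟨?_, fun ⟨hvy, hvz⟩ =>
      (h.adj_or_adj v hvy hvz).imp SimpleGraph.Adj.symm SimpleGraph.Adj.symm⟩
    rintro (hyv | hzv)
    · exact ⟨hyv.ne', fun hvz => h.not_adj (hvz ▸ hyv)⟩
    · exact ⟨fun hvy => h.not_adj (hvy ▸ hzv).symm, hzv.ne'⟩
  have hcompl : #({y, z}ᶜ : Finset V) + 2 = Fintype.card V := by
    rw [← card_pair h.ne, card_compl_add_card]
  have := card_union_add_card_inter (G.neighborFinset y) (G.neighborFinset z)
  rw [hinter, hunion, G.card_neighborFinset_eq_degree, G.card_neighborFinset_eq_degree] at this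
  omega

theorem degree_of_not_adj (h : IsCliqueDominatedBy G y z) {v : V} (hvy : v ≠ y) (hvz : v ≠ z)
    (hnot : ¬ G.Adj v z) : G.degree v = Fintype.card V - 2 := by
  refine degree_eq_card_sub_two hvz fun u => ⟨fun hvu => ⟨hvu.ne', ?_⟩, fun ⟨huv, huz⟩ => ?_⟩
  · rintro rfl
    exact hnot hvu
  · obtain rfl | huy := eq_or_ne u y
    · exact (h.adj_or_adj v hvy hvz).resolve_right hnot
    · exact h.isClique (by simp [hvy, hvz]) (by simp [huy, huz]) huv.symm

theorem degree_of_ne (h : IsCliqueDominatedBy G y z) {v : V} (hvy : v ≠ y) (hvz : v ≠ z) :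
    G.degree v = Fintype.card V - 1 ∨ G.degree v = Fintype.card V - 2 := by
  by_cases hy : G.Adj v y
  · by_cases hz : G.Adj v z
    · exact .inl ((G.degree_eq_card_sub_one v).2 (h.isUniversal_iff.2 ⟨hy.symm, hz.symm⟩))
    · exact .inr (h.degree_of_not_adj hvy hvz hz)
  · exact .inr (h.symm.degree_of_not_adj hvz hvy hy)

end IsCliqueDominatedBy

end Degree

theorem stmt_9 {V : Type*} [Fintype V] [DecidableEq V]
    (G : SimpleGraph V) [DecidableRel G.Adj]
    (n : ℕ) (hn : Fintype.card V = n) (hn4 : 4 ≤ n)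
    (hNoIso : ∀ v : V, ∃ w : V, G.Adj v w)
    (r p : ℕ)
    (hr : r = (Finset.univ.filter fun v : V => G.degree v = 1).card)
    (hp : p = (Finset.univ.filter fun v : V => G.degree v = n - 1).card)
    (hEq : Equimatchable G) (hSplit : IsSplitGraph G) :
      p = n ∨
      (r = n - 1 ∧ p = 1) ∨
      (p = 1 ∧ 2 ≤ r ∧ Even (n - r) ∧
        ∀ v : V, G.degree v = 1 ∨ G.degree v = n - r - 1 ∨ G.degree v = n - 1) ∨
      (p = 0 ∧ 2 ≤ r ∧ Even (n - r) ∧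
        ∃ x y : V, x ≠ y ∧ ¬ G.Adj x y ∧
          G.degree x = n - 2 ∧ G.degree y = n - r - 2 ∧
          ∀ v : V, v ≠ x → v ≠ y → (G.degree v = 1 ∨ G.degree v = n - r - 1)) ∨
      (Odd n ∧ ∃ x y : V, x ≠ y ∧ G.degree x + G.degree y = p + n - 2 ∧
        ∀ v : V, v ≠ x → v ≠ y → (G.degree v = n - 1 ∨ G.degree v = n - 2)) := by
  subst hn hr hp
  obtain htop | ⟨C, x, heven, hcard, hx, hC⟩ | ⟨C, x, y, heven, hcard, hx, hC⟩ |
    ⟨hodd, y, z, hyz⟩ := hEq.classification hNoIso hSplit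
  · have huniv := SimpleGraph.eq_top_iff_forall_isUniversal.1 htop
    refine .inl (card_eq_iff_eq_univ _ |>.2 <| filter_true_of_mem fun v _ => ?_)
    exact (G.degree_eq_card_sub_one v).2 (huniv v)
  · have huniv := hx.card_filter_degree_eq_card_sub_one hC hcard
    by_cases htwo : #C = 2
    · exact .inr (.inl ⟨hx.card_filter_degree_eq_one_of_card_eq_two hC hcard htwo, huniv⟩)
    · exact .inr (.inr (.inl ⟨huniv, hx.degree_classification_of_isClique hC heven hcard htwo⟩))
  · refine .inr (.inr (.inr (.inl ⟨hC.card_filter_degree_eq_card_sub_one hx hcard, ?_⟩)))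
    exact hC.degree_classification hx hNoIso heven hcard
  · refine .inr (.inr (.inr (.inr ⟨hodd, y, z, hyz.ne, hyz.degree_add_degree, fun v => ?_⟩)))
    exact hyz.degree_of_ne
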